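/- arXiv:2105.03286 — 4 statements merged into one kernel-verified Lean document; each statement's English description precedes it below -/
import Mathlib

section
/- Let (X,r) be a set-theoretic YBE solution, (F,Φ,Ψ) a Drinfeld twist on (X,r), and (G,φ,ψ) a Drinfeld twist on the twisted solution (X, F∘r∘F⁻¹). Then the triple (G∘F, F₂₃⁻¹∘φ∘F₂₃∘Φ, F₁₂⁻¹∘ψ∘F₁₂∘Ψ) is a Drinfeld twist on (X,r). -/
namespace YBETwist

/-- Apply a map on `X × X` to the factors 1,2 of a triple: `f₁₂ = f × id`. -/
def E12 {X : Type*} (f : (X × X) ≃ (X × X)) : (X × X × X) ≃ (X × X × X) :=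
  ((Equiv.prodAssoc X X X).symm.trans (f.prodCongr (Equiv.refl X))).trans
    (Equiv.prodAssoc X X X)

/-- Apply a map on `X × X` to the factors 2,3 of a triple: `f₂₃ = id × f`. -/
def E23 {X : Type*} (f : (X × X) ≃ (X × X)) : (X × X × X) ≃ (X × X × X) :=
  (Equiv.refl X).prodCongr f

/-- The braid relation `r₂₃ ∘ r₁₂ ∘ r₂₃ = r₁₂ ∘ r₂₃ ∘ r₁₂`; a set-theoretic YBE solution is a
bijection `r : X² → X²` satisfying it. -/
def IsBraided {X : Type*} (r : (X × X) ≃ (X × X)) : Prop :=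
  ∀ p : X × X × X, E23 r (E12 r (E23 r p)) = E12 r (E23 r (E12 r p))

/-- A Drinfeld twist `(F, Φ, Ψ)` on a set-theoretic YBE solution `(X, r)`. -/
structure IsTwist {X : Type*} (r F : (X × X) ≃ (X × X))
    (Φ Ψ : (X × X × X) ≃ (X × X × X)) : Prop where
  t1 : ∀ p, E12 F (Ψ p) = E23 F (Φ p)
  t2 : ∀ p, Φ (E23 r p) = E23 r (Φ p)
  t3 : ∀ p, Ψ (E12 r p) = E12 r (Ψ p)

/-- The twisted map `F ∘ r ∘ F⁻¹`. -/
def twisted {X : Type*} (r F : (X × X) ≃ (X × X)) : (X × X) ≃ (X × X) :=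
  (F.symm.trans r).trans F

/-!
`F₁₂` and `F₂₃` intertwine `r₁₂` and `r₂₃` with their analogues for `F ∘ r ∘ F⁻¹`. Conjugating by
them therefore turns maps commuting with the twisted braidings into maps commuting with the original
ones, and in (T1) for `G ∘ F` the conjugating factors cancel.
-/

theorem E12_trans {X : Type*} (F G : (X × X) ≃ (X × X)) :
    E12 (F.trans G) = (E12 F).trans (E12 G) := rfl

theorem E23_trans {X : Type*} (F G : (X × X) ≃ (X × X)) :
    E23 (F.trans G) = (E23 F).trans (E23 G) := rfl

theorem semiconj_twisted {X : Type*} (r F : (X × X) ≃ (X × X)) :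
    Function.Semiconj F r (twisted r F) := fun p => by
  simp only [twisted, Equiv.trans_apply, Equiv.symm_apply_apply]

theorem semiconj_E12 {X : Type*} {F r s : (X × X) ≃ (X × X)} (h : Function.Semiconj F r s) :
    Function.Semiconj (E12 F) (E12 r) (E12 s) := fun ⟨x, y, z⟩ =>
  congrArg (fun q : X × X => (q.1, q.2, z)) (h (x, y))

theorem semiconj_E23 {X : Type*} {F r s : (X × X) ≃ (X × X)} (h : Function.Semiconj F r s) :
    Function.Semiconj (E23 F) (E23 r) (E23 s) := fun ⟨x, q⟩ =>
  congrArg (Prod.mk x) (h q)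

theorem commute_symm_comp_comp {α β : Type*} {e : α ≃ β} {f : α → α} {g φ : β → β}
    (he : Function.Semiconj e f g) (hφ : Function.Commute φ g) :
    Function.Commute (e.symm ∘ φ ∘ e) f :=
  (he.trans hφ).trans (he.inverse_left e.left_inv e.right_inv)

theorem comp_of_twists_is_twist_general {X : Type*} {r F G : (X × X) ≃ (X × X)}
    {Φ Ψ φ ψ : (X × X × X) ≃ (X × X × X)}
    (hF : IsTwist r F Φ Ψ) (hG : IsTwist (twisted r F) G φ ψ) :
    IsTwist r (F.trans G)
      (((Φ.trans (E23 F)).trans φ).trans (E23 F).symm)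
      (((Ψ.trans (E12 F)).trans ψ).trans (E12 F).symm) where
  t1 p := by
    simp only [E12_trans, E23_trans, Equiv.trans_apply, Equiv.apply_symm_apply]
    calc E12 G (ψ (E12 F (Ψ p)))
        = E23 G (φ (E12 F (Ψ p))) := hG.t1 _
      _ = E23 G (φ (E23 F (Φ p))) := by rw [hF.t1]
  t2 := (commute_symm_comp_comp (semiconj_E23 (semiconj_twisted r F)) hG.t2).comp_left hF.t2
  t3 := (commute_symm_comp_comp (semiconj_E12 (semiconj_twisted r F)) hG.t3).comp_left hF.t3

theorem comp_of_twists_is_twist {X : Type*} (r F G : (X × X) ≃ (X × X))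
    (Φ Ψ φ ψ : (X × X × X) ≃ (X × X × X))
    (hr : IsBraided r) (ht : IsTwist r F Φ Ψ)
    (ht' : IsTwist (twisted r F) G φ ψ) :
    IsTwist r (F.trans G)
      (((Φ.trans (E23 F)).trans φ).trans (E23 F).symm)
      (((Ψ.trans (E12 F)).trans ψ).trans (E12 F).symm) :=
  comp_of_twists_is_twist_general ht ht'

end YBETwist
end

section
/- Let (G,·,e) be a group with braiding operator r, (F,Φ,Ψ) a Drinfeld twist on (G,·,e,r), and (𝐅,φ,ψ) a Drinfeld twist on the twisted group with braiding operator (G, m∘F⁻¹, e, F∘r∘F⁻¹). Then (𝐅∘F, F₂₃⁻¹∘φ∘F₂₃∘Φ, F₁₂⁻¹∘ψ∘F₁₂∘Ψ) is a Drinfeld twist on (G,·,e,r). -/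
namespace BraceTwist

/-- Apply a map on `G × G` to the factors 1,2 of a triple: `f₁₂ = f × id`. -/
def E12 {G : Type*} (f : (G × G) ≃ (G × G)) : (G × G × G) ≃ (G × G × G) :=
  ((Equiv.prodAssoc G G G).symm.trans (f.prodCongr (Equiv.refl G))).trans
    (Equiv.prodAssoc G G G)

/-- Apply a map on `G × G` to the factors 2,3 of a triple: `f₂₃ = id × f`. -/
def E23 {G : Type*} (f : (G × G) ≃ (G × G)) : (G × G × G) ≃ (G × G × G) :=
  (Equiv.refl G).prodCongr f

/-- `m₁₂ : G³ → G²`, multiplying the first two factors. -/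
def M12 {G : Type*} (mul : G → G → G) : G × G × G → G × G :=
  fun p => (mul p.1 p.2.1, p.2.2)

/-- `m₂₃ : G³ → G²`, multiplying the last two factors. -/
def M23 {G : Type*} (mul : G → G → G) : G × G × G → G × G :=
  fun p => (p.1, mul p.2.1 p.2.2)

/-- `(mul, e, inv)` is a group structure on `G`. -/
structure IsGroup {G : Type*} (mul : G → G → G) (e : G) (inv : G → G) : Prop where
  mul_assoc : ∀ a b c, mul (mul a b) c = mul a (mul b c)
  one_mul : ∀ a, mul e a = a
  mul_one : ∀ a, mul a e = a
  inv_mul : ∀ a, mul (inv a) a = e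
  mul_inv : ∀ a, mul a (inv a) = e

/-- `r` is a braiding operator on the group `(G, mul, e)`. -/
structure IsBraidingOp {G : Type*} (mul : G → G → G) (e : G)
    (r : (G × G) ≃ (G × G)) : Prop where
  unit_left : ∀ g, r (e, g) = (g, e)
  unit_right : ∀ g, r (g, e) = (e, g)
  br1 : ∀ p : G × G × G, r (M12 mul p) = M23 mul (E12 r (E23 r p))
  br2 : ∀ p : G × G × G, r (M23 mul p) = M12 mul (E23 r (E12 r p))
  mul_r : ∀ p : G × G, mul (r p).1 (r p).2 = mul p.1 p.2

/-- A Drinfeld twist `(F, Φ, Ψ)` on the group with braiding operator `(G, mul, e, r)`. -/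
structure IsGrpTwist {G : Type*} (mul : G → G → G) (e : G)
    (r F : (G × G) ≃ (G × G)) (Φ Ψ : (G × G × G) ≃ (G × G × G)) : Prop where
  t1 : ∀ p, E12 F (Ψ p) = E23 F (Φ p)
  t2 : ∀ p, Φ (E23 r p) = E23 r (Φ p)
  t3 : ∀ p, Ψ (E12 r p) = E12 r (Ψ p)
  g1a : ∀ x y, Ψ (x, y, e) = (x, y, e)
  g1b : ∀ x y, Φ (e, x, y) = (e, x, y)
  g2a : ∀ x, F (e, x) = (e, x)
  g2b : ∀ x, F (x, e) = (x, e)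
  g3 : ∀ p : G × G × G, M23 mul (Φ p) = F (M23 mul p)
  g4 : ∀ p : G × G × G, M12 mul (Ψ p) = F (M12 mul p)

/-- The twisted map `F ∘ r ∘ F⁻¹`. -/
def twisted {G : Type*} (r F : (G × G) ≃ (G × G)) : (G × G) ≃ (G × G) :=
  (F.symm.trans r).trans F

/-- The twisted multiplication `m ∘ F⁻¹`. -/
def twistMul {G : Type*} (mul : G → G → G) (F : (G × G) ≃ (G × G)) : G → G → G :=
  fun x y => mul (F.symm (x, y)).1 (F.symm (x, y)).2

/-!
Up to conjugation by `F₂₃`, respectively `F₁₂`, the twisted data `F ∘ r ∘ F⁻¹` and `m ∘ F⁻¹` become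
the original `r` and `m`. Pulling `φ` and `ψ` back along these conjugations therefore turns their
axioms (T2), (T3), (G1), (G3), (G4) into statements about the untwisted group, which are stable
under composition with `Φ` and `Ψ`. Only (T1) mixes the two sides; there the inverses `F₁₂⁻¹` and
`F₂₃⁻¹` cancel against the factor `F` of the composite twist.
-/

section Conjugation

open Function

variable {α β γ : Type*} (f : α ≃ β)

theorem commute_symm_conj {φ a' : β → β} {a : α → α} (hf : Semiconj f a a')
    (hφ : Function.Commute φ a') : Function.Commute (f.symm.conj φ) a :=
  (hf.trans hφ).trans (hf.inverse_left f.left_inv f.right_inv)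

theorem isFixedPt_symm_conj {φ : β → β} {x : α} (hφ : IsFixedPt φ (f x)) :
    IsFixedPt (f.symm.conj φ) x := by
  simpa only [f.symm_apply_apply] using hφ.map (f.symm.semiconj_conj φ)

theorem semiconj_comp_symm_conj {g : β → γ} {φ : β → β} {h : γ → γ} (hg : Semiconj g φ h) :
    Semiconj (g ∘ f) (f.symm.conj φ) h :=
  Semiconj.trans (fun _ => f.apply_symm_apply _) hg

end Conjugation

section Twist

open Function

variable {G : Type*}

theorem E12_trans (f g : (G × G) ≃ (G × G)) : E12 (f.trans g) = (E12 f).trans (E12 g) :=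
  rfl

theorem E23_trans (f g : (G × G) ≃ (G × G)) : E23 (f.trans g) = (E23 f).trans (E23 g) :=
  rfl

theorem semiconj_E12 {f a b : (G × G) ≃ (G × G)} (h : Semiconj f a b) :
    Semiconj (E12 f) (E12 a) (E12 b) :=
  fun p => congrArg (fun q : G × G => (q.1, q.2, p.2.2)) (h (p.1, p.2.1))

theorem semiconj_E23 {f a b : (G × G) ≃ (G × G)} (h : Semiconj f a b) :
    Semiconj (E23 f) (E23 a) (E23 b) :=
  fun p => congrArg (Prod.mk p.1) (h p.2)

theorem semiconj_twisted (r F : (G × G) ≃ (G × G)) : Semiconj F r (twisted r F) :=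
  F.semiconj_conj r

theorem twistMul_apply (mul : G → G → G) (F : (G × G) ≃ (G × G)) (p : G × G) :
    twistMul mul F (F p).1 (F p).2 = mul p.1 p.2 := by
  simp only [twistMul, Prod.mk.eta, F.symm_apply_apply]

theorem M12_twistMul_comp_E12 (mul : G → G → G) (F : (G × G) ≃ (G × G)) :
    M12 (twistMul mul F) ∘ E12 F = M12 mul :=
  funext fun p => congrArg (Prod.mk · p.2.2) (twistMul_apply mul F (p.1, p.2.1))

theorem M23_twistMul_comp_E23 (mul : G → G → G) (F : (G × G) ≃ (G × G)) :
    M23 (twistMul mul F) ∘ E23 F = M23 mul :=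
  funext fun p => congrArg (Prod.mk p.1) (twistMul_apply mul F p.2)

theorem semiconj_M12_symm_conj_E12 {mul : G → G → G} {F : (G × G) ≃ (G × G)}
    {F' : G × G → G × G} {ψ : G × G × G → G × G × G}
    (hψ : Semiconj (M12 (twistMul mul F)) ψ F') :
    Semiconj (M12 mul) ((E12 F).symm.conj ψ) F' :=
  M12_twistMul_comp_E12 mul F ▸ semiconj_comp_symm_conj (E12 F) hψ

theorem semiconj_M23_symm_conj_E23 {mul : G → G → G} {F : (G × G) ≃ (G × G)}
    {F' : G × G → G × G} {φ : G × G × G → G × G × G}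
    (hφ : Semiconj (M23 (twistMul mul F)) φ F') :
    Semiconj (M23 mul) ((E23 F).symm.conj φ) F' :=
  M23_twistMul_comp_E23 mul F ▸ semiconj_comp_symm_conj (E23 F) hφ

theorem E12_trans_apply_eq_E23_trans_apply {F F' : (G × G) ≃ (G × G)}
    {Φ Ψ φ ψ : G × G × G → G × G × G} (h : ∀ p, E12 F (Ψ p) = E23 F (Φ p))
    (h' : ∀ p, E12 F' (ψ p) = E23 F' (φ p)) (p : G × G × G) :
    E12 (F.trans F') ((E12 F).symm (ψ (E12 F (Ψ p)))) =
      E23 (F.trans F') ((E23 F).symm (φ (E23 F (Φ p)))) :=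
  calc
    _ = E12 F' (ψ (E12 F (Ψ p))) := by
      rw [E12_trans, Equiv.trans_apply, Equiv.apply_symm_apply]
    _ = E12 F' (ψ (E23 F (Φ p))) := by rw [h]
    _ = E23 F' (φ (E23 F (Φ p))) := h' _
    _ = _ := by rw [E23_trans, Equiv.trans_apply, Equiv.apply_symm_apply]

theorem comp_of_grp_twists_is_twist_general {mul : G → G → G} {e : G}
    {r F F' : (G × G) ≃ (G × G)} {Φ Ψ φ ψ : (G × G × G) ≃ (G × G × G)}
    (ht : IsGrpTwist mul e r F Φ Ψ)
    (ht' : IsGrpTwist (twistMul mul F) e (twisted r F) F' φ ψ) :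
    IsGrpTwist mul e r (F.trans F')
      (((Φ.trans (E23 F)).trans φ).trans (E23 F).symm)
      (((Ψ.trans (E12 F)).trans ψ).trans (E12 F).symm) where
  t1 := E12_trans_apply_eq_E23_trans_apply ht.t1 ht'.t1
  t2 := (commute_symm_conj (E23 F) (semiconj_E23 (semiconj_twisted r F)) ht'.t2).comp_left ht.t2
  t3 := (commute_symm_conj (E12 F) (semiconj_E12 (semiconj_twisted r F)) ht'.t3).comp_left ht.t3
  g1a x y := (isFixedPt_symm_conj (E12 F) (x := (x, y, e)) (ht'.g1a _ _)).comp (ht.g1a x y)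
  g1b x y := (isFixedPt_symm_conj (E23 F) (x := (e, x, y)) (ht'.g1b _ _)).comp (ht.g1b x y)
  g2a x := IsFixedPt.comp (ht'.g2a x) (ht.g2a x)
  g2b x := IsFixedPt.comp (ht'.g2b x) (ht.g2b x)
  g3 := (semiconj_M23_symm_conj_E23 ht'.g3).comp_right ht.g3
  g4 := (semiconj_M12_symm_conj_E12 ht'.g4).comp_right ht.g4

end Twist

theorem comp_of_grp_twists_is_twist {G : Type*} (mul : G → G → G) (e : G)
    (inv : G → G) (hG : IsGroup mul e inv)
    (r F F' : (G × G) ≃ (G × G)) (Φ Ψ φ ψ : (G × G × G) ≃ (G × G × G))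
    (hr : IsBraidingOp mul e r) (ht : IsGrpTwist mul e r F Φ Ψ)
    (ht' : IsGrpTwist (twistMul mul F) e (twisted r F) F' φ ψ) :
    IsGrpTwist mul e r (F.trans F')
      (((Φ.trans (E23 F)).trans φ).trans (E23 F).symm)
      (((Ψ.trans (E12 F)).trans ψ).trans (E12 F).symm) :=
  comp_of_grp_twists_is_twist_general ht ht'

end BraceTwist
end

section
/- Let (G,·,e) be a group with braiding operator r and (F,Φ,Ψ) a Drinfeld twist on (G,·,e,r). Then (F⁻¹, F₂₃∘Φ⁻¹∘F₂₃⁻¹, F₁₂∘Ψ⁻¹∘F₁₂⁻¹) is a Drinfeld twist on the twisted group with braiding operator (G, m∘F⁻¹, e, F∘r∘F⁻¹), and twisting by this triple recovers the original structure: (m∘F⁻¹)∘(F⁻¹)⁻¹ = m and F⁻¹∘(F∘r∘F⁻¹)∘F = r. -/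
/-!
In the group of permutations of `G³`, axiom (T1) reads `F₁₂ Ψ = F₂₃ Φ`, and inverting both sides
gives (T1) for the inverse triple. The remaining axioms on `Φ` and `Ψ` say that they commute with a
permutation, fix a point, or are semiconjugated by a map to `F`. Each of these properties survives
inversion, and conjugation by `F₂₃` or `F₁₂` carries the data `r₂₃`, `m₂₃`, `r₁₂`, `m₁₂` of the
original structure to that of the twisted one.
-/

namespace BraceTwist

section Conjugation

open Function Equiv

variable {α β : Type*}

theorem inv_mul_conj_inv_eq {K : Type*} [Group K] {a b x y : K} (h : a * x = b * y) :
    a⁻¹ * (a * x⁻¹ * a⁻¹) = b⁻¹ * (b * y⁻¹ * b⁻¹) := by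
  simpa [mul_assoc] using congrArg (·⁻¹) h

theorem semiconj_perm_conj (a f : Perm α) : Semiconj a f (a * f * a⁻¹ : Perm α) :=
  fun x => by simp

theorem isFixedPt_perm_conj_inv {a f : Perm α} {x : α} (h : IsFixedPt f (a⁻¹ x)) :
    IsFixedPt (a * f⁻¹ * a⁻¹ : Perm α) x := by
  simpa using h.perm_inv.map (semiconj_perm_conj a f⁻¹)

theorem semiconj_comp_inv_perm_conj_inv {u : α → β} {f : Perm α} {g : Perm β}
    (h : Semiconj u f g) (a : Perm α) :
    Semiconj (u ∘ ⇑a⁻¹) (a * f⁻¹ * a⁻¹ : Perm α) (g⁻¹ : Perm β) := by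
  have hu : Semiconj u (f⁻¹ : Perm α) (g⁻¹ : Perm β) :=
    h.inverses_right f.right_inv g.left_inv
  have ha : Semiconj (a⁻¹ : Perm α) (a * f⁻¹ * a⁻¹ : Perm α) (f⁻¹ : Perm α) :=
    (semiconj_perm_conj a f⁻¹).inverse_left a.left_inv a.right_inv
  exact hu.comp_left ha

end Conjugation

section Twisting

variable {G : Type*} (mul : G → G → G) (r F : (G × G) ≃ (G × G))

theorem E12_inv_apply (x y z : G) :
    (E12 F)⁻¹ (x, y, z) = ((F⁻¹ (x, y)).1, (F⁻¹ (x, y)).2, z) := rfl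

theorem E23_inv_apply (x y z : G) : (E23 F)⁻¹ (x, y, z) = (x, F⁻¹ (y, z)) := rfl

theorem E12_twisted : E12 (twisted r F) = E12 F * E12 r * (E12 F)⁻¹ := rfl

theorem E23_twisted : E23 (twisted r F) = E23 F * E23 r * (E23 F)⁻¹ := rfl

theorem M12_twistMul : M12 (twistMul mul F) = M12 mul ∘ ⇑(E12 F)⁻¹ := rfl

theorem M23_twistMul : M23 (twistMul mul F) = M23 mul ∘ ⇑(E23 F)⁻¹ := rfl

theorem twistMul_apply_fst_snd (p : G × G) :
    twistMul mul F (F p).1 (F p).2 = mul p.1 p.2 := by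
  simp [twistMul]

theorem symm_twisted_apply (p : G × G) : F.symm (twisted r F (F p)) = r p := by
  simp [twisted]

end Twisting

namespace IsGrpTwist

variable {G : Type*} {mul : G → G → G} {e : G} {r F : (G × G) ≃ (G × G)}
  {Φ Ψ : (G × G × G) ≃ (G × G × G)}

theorem inverse (ht : IsGrpTwist mul e r F Φ Ψ) :
    IsGrpTwist (twistMul mul F) e (twisted r F) F⁻¹
      (E23 F * Φ⁻¹ * (E23 F)⁻¹) (E12 F * Ψ⁻¹ * (E12 F)⁻¹) where
  t1 := by
    have h : E12 F * Ψ = E23 F * Φ := Equiv.ext ht.t1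
    exact DFunLike.congr_fun (inv_mul_conj_inv_eq h)
  t2 := by
    have h : Commute Φ (E23 r) := Equiv.ext ht.t2
    rw [E23_twisted]
    exact DFunLike.congr_fun (h.inv_left.conj (E23 F)).eq
  t3 := by
    have h : Commute Ψ (E12 r) := Equiv.ext ht.t3
    rw [E12_twisted]
    exact DFunLike.congr_fun (h.inv_left.conj (E12 F)).eq
  g1a x y := isFixedPt_perm_conj_inv <| by
    rw [E12_inv_apply]
    exact ht.g1a _ _
  g1b x y := isFixedPt_perm_conj_inv <| by
    rw [E23_inv_apply]
    exact ht.g1b _ _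
  g2a x := Function.IsFixedPt.perm_inv (ht.g2a x)
  g2b x := Function.IsFixedPt.perm_inv (ht.g2b x)
  g3 := by
    rw [M23_twistMul]
    exact semiconj_comp_inv_perm_conj_inv ht.g3 (E23 F)
  g4 := by
    rw [M12_twistMul]
    exact semiconj_comp_inv_perm_conj_inv ht.g4 (E12 F)

end IsGrpTwist

theorem inverse_grp_twist_general {G : Type*} (mul : G → G → G) (e : G)
    (r F : (G × G) ≃ (G × G)) (Φ Ψ : (G × G × G) ≃ (G × G × G))
    (ht : IsGrpTwist mul e r F Φ Ψ) :
    IsGrpTwist (twistMul mul F) e (twisted r F) F.symm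
      (((E23 F).symm.trans Φ.symm).trans (E23 F))
      (((E12 F).symm.trans Ψ.symm).trans (E12 F)) ∧
    (∀ p : G × G, twistMul mul F (F p).1 (F p).2 = mul p.1 p.2) ∧
    (∀ p : G × G, F.symm (twisted r F (F p)) = r p) :=
  ⟨ht.inverse, twistMul_apply_fst_snd mul F, symm_twisted_apply r F⟩

theorem inverse_grp_twist {G : Type*} (mul : G → G → G) (e : G) (inv : G → G)
    (hG : IsGroup mul e inv)
    (r F : (G × G) ≃ (G × G)) (Φ Ψ : (G × G × G) ≃ (G × G × G))
    (hr : IsBraidingOp mul e r) (ht : IsGrpTwist mul e r F Φ Ψ) :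
    IsGrpTwist (twistMul mul F) e (twisted r F) F.symm
      (((E23 F).symm.trans Φ.symm).trans (E23 F))
      (((E12 F).symm.trans Ψ.symm).trans (E12 F)) ∧
    (∀ p : G × G, twistMul mul F (F p).1 (F p).2 = mul p.1 p.2) ∧
    (∀ p : G × G, F.symm (twisted r F (F p)) = r p) :=
  inverse_grp_twist_general mul e r F Φ Ψ ht

end BraceTwist
end

section
/- Let G be a set carrying two group structures (G,·,e) and (G,⋆,e) with the same identity element e, and let {f_x : G → G}_{x∈G} be a family of bijections such that each f_x is a group isomorphism from (G,·) to (G,⋆) (f_x(a·b) = f_x(a) ⋆ f_x(b)) and f_x(x) = x for all x ∈ G. Define F(x,y) := (f_{x·y}(x), f_{x·y}(y)); α_{x,c} := f_{f_{x·c}(c)}⁻¹ ∘ f_{x·c}; Φ(x,y,z) := (f_{x·y·z}(x), α_{x,y·z}(y), α_{x,y·z}(z)); β_{c,z} := f_{f_{c·z}(c)}⁻¹ ∘ f_{c·z}; Ψ(x,y,z) := (β_{x·y,z}(x), β_{x·y,z}(y), f_{x·y·z}(z)). Then (F,Φ,Ψ) is a Drinfeld twist on the group (G,·,e) equipped with the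 conjugation braiding operator r(x,y) = (y, y⁻¹·x·y), and the twisted multiplication satisfies m∘F⁻¹ = ⋆. -/
namespace BraceTwist

/-!
For fixed `s` and `c`, set `α = f_{f_s(c)}⁻¹ ∘ f_s`. This is an endomorphism of `(G, ·)`, hence it
commutes with the conjugation braiding, which gives (T2) and (T3). Since `f_d` fixes `d`, also
`α(c) = f_s(c)`; for `c = a · b` this says `α(a) · α(b) = f_s(a · b)`, which is the compatibility
with multiplication. Applying `f` at the point `f_s(c)` undoes the inverse in `α`, so both sides of
(T1) send `(x, y, z)` to `(f_s(x), f_s(y), f_s(z))` with `s = x · y · z`.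
-/

@[simp]
theorem E12_apply {G : Type*} (F : (G × G) ≃ (G × G)) (x y z : G) :
    E12 F (x, y, z) = ((F (x, y)).1, (F (x, y)).2, z) := rfl

@[simp]
theorem E23_apply {G : Type*} (F : (G × G) ≃ (G × G)) (x y z : G) :
    E23 F (x, y, z) = (x, F (y, z)) := rfl

namespace IsGroup

variable {G H : Type*} {mul : G → G → G} {e : G} {inv : G → G}
  {mulH : H → H → H} {eH : H} {invH : H → H} {φ : G → H}

/-- The Mathlib group with operations `mul`, `e`, `inv`, through which unbundled group structures
inherit the library's lemmas. -/
abbrev toGroup (hG : IsGroup mul e inv) : Group G where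
  mul := mul
  one := e
  inv := inv
  mul_assoc := hG.mul_assoc
  one_mul := hG.one_mul
  mul_one := hG.mul_one
  inv_mul_cancel := hG.inv_mul

theorem map_one (hG : IsGroup mul e inv) (hH : IsGroup mulH eH invH)
    (hφ : ∀ a b, φ (mul a b) = mulH (φ a) (φ b)) : φ e = eH :=
  let _ := hG.toGroup
  let _ := hH.toGroup
  (MonoidHom.mk' φ hφ).map_one

theorem map_inv (hG : IsGroup mul e inv) (hH : IsGroup mulH eH invH)
    (hφ : ∀ a b, φ (mul a b) = mulH (φ a) (φ b)) (a : G) : φ (inv a) = invH (φ a) :=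
  let _ := hG.toGroup
  let _ := hH.toGroup
  (MonoidHom.mk' φ hφ).map_inv a

theorem map_conj (hG : IsGroup mul e inv) (hH : IsGroup mulH eH invH)
    (hφ : ∀ a b, φ (mul a b) = mulH (φ a) (φ b)) (x y : G) :
    φ (mul (mul (inv y) x) y) = mulH (mulH (invH (φ y)) (φ x)) (φ y) := by
  rw [hφ, hφ, hG.map_inv hH hφ]

theorem mul_conj (hG : IsGroup mul e inv) (x y : G) :
    mul y (mul (mul (inv y) x) y) = mul x y := by
  rw [← hG.mul_assoc, ← hG.mul_assoc, hG.mul_inv, hG.one_mul]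

end IsGroup

section Twist

variable {G : Type*}

/-- The map `F(x, y) = (f_{x·y}(x), f_{x·y}(y))` of the twist. -/
def pairTwist (mul f : G → G → G) : G × G → G × G :=
  fun p => (f (mul p.1 p.2) p.1, f (mul p.1 p.2) p.2)

/-- The map `f_{f_s(c)}⁻¹ ∘ f_s`, with `g x` standing for `f_x⁻¹`. The maps of the twist are the
special cases `α_{x,c}` at `s = x·c` and `β_{c,z}` at `s = c·z`. -/
def transition (f g : G → G → G) (s c : G) : G → G :=
  fun a => g (f s c) (f s a)

/-- The map `Φ` of the twist, acting on the last two factors by `α_{x,y·z}`. -/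
def rightTwist (mul f g : G → G → G) : G × G × G → G × G × G :=
  fun (x, y, z) =>
    let c := mul y z
    let s := mul x c
    (f s x, transition f g s c y, transition f g s c z)

/-- The map `Ψ` of the twist, acting on the first two factors by `β_{x·y,z}`. -/
def leftTwist (mul f g : G → G → G) : G × G × G → G × G × G :=
  fun (x, y, z) =>
    let c := mul x y
    let s := mul c z
    (transition f g s c x, transition f g s c y, f s z)

/-- `(f x)` is a family of isomorphisms from `(G, mul)` to `(G, smul)`, with inverses `(g x)`, such
that `f x` fixes its index `x`. -/
structure IsIndexFixingIsos (mul smul f g : G → G → G) : Prop where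
  leftInverse : ∀ x, Function.LeftInverse (g x) (f x)
  rightInverse : ∀ x, Function.RightInverse (g x) (f x)
  map_mul : ∀ x a b, f x (mul a b) = smul (f x a) (f x b)
  map_index : ∀ x, f x x = x

namespace IsIndexFixingIsos

variable {mul smul f g : G → G → G} {e : G} {inv sinv : G → G}

theorem symm_map_mul (hf : IsIndexFixingIsos mul smul f g) (x a b : G) :
    g x (smul a b) = mul (g x a) (g x b) := by
  rw [← hf.leftInverse x (mul (g x a) (g x b)), hf.map_mul, hf.rightInverse, hf.rightInverse]

theorem symm_map_index (hf : IsIndexFixingIsos mul smul f g) (x : G) : g x x = x := by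
  simpa only [hf.map_index] using hf.leftInverse x x

theorem smul_pairTwist (hf : IsIndexFixingIsos mul smul f g) (p : G × G) :
    smul (pairTwist mul f p).1 (pairTwist mul f p).2 = mul p.1 p.2 := by
  rw [pairTwist, ← hf.map_mul, hf.map_index]

theorem transition_mul (hf : IsIndexFixingIsos mul smul f g) (s c a b : G) :
    transition f g s c (mul a b) = mul (transition f g s c a) (transition f g s c b) := by
  rw [transition, hf.map_mul, hf.symm_map_mul, transition, transition]

theorem transition_apply_self (hf : IsIndexFixingIsos mul smul f g) (s c : G) :
    transition f g s c c = f s c :=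
  hf.symm_map_index (f s c)

theorem transition_self (hf : IsIndexFixingIsos mul smul f g) (c a : G) :
    transition f g c c a = a := by
  rw [transition, hf.map_index, hf.leftInverse]

theorem map_transition (hf : IsIndexFixingIsos mul smul f g) (s c a : G) :
    f (f s c) (transition f g s c a) = f s a :=
  hf.rightInverse (f s c) (f s a)

theorem mul_transition (hf : IsIndexFixingIsos mul smul f g) (s a b : G) :
    mul (transition f g s (mul a b) a) (transition f g s (mul a b) b) = f s (mul a b) := by
  rw [← hf.transition_mul, hf.transition_apply_self]

theorem transition_conj (hf : IsIndexFixingIsos mul smul f g) (hG : IsGroup mul e inv)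
    (s c x y : G) :
    transition f g s c (mul (mul (inv y) x) y) =
      mul (mul (inv (transition f g s c y)) (transition f g s c x)) (transition f g s c y) :=
  hG.map_conj hG (hf.transition_mul s c) x y

theorem M23_rightTwist (hf : IsIndexFixingIsos mul smul f g) (p : G × G × G) :
    M23 mul (rightTwist mul f g p) = pairTwist mul f (M23 mul p) := by
  simp only [M23, rightTwist, pairTwist, hf.mul_transition]

theorem M12_leftTwist (hf : IsIndexFixingIsos mul smul f g) (p : G × G × G) :
    M12 mul (leftTwist mul f g p) = pairTwist mul f (M12 mul p) := by
  simp only [M12, leftTwist, pairTwist, hf.mul_transition]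

theorem E12_leftTwist (hf : IsIndexFixingIsos mul smul f g) {F : (G × G) ≃ (G × G)}
    (hF : ⇑F = pairTwist mul f) (x y z : G) :
    E12 F (leftTwist mul f g (x, y, z)) =
      (f (mul (mul x y) z) x, f (mul (mul x y) z) y, f (mul (mul x y) z) z) := by
  simp only [leftTwist, E12_apply, hF, pairTwist, hf.mul_transition, hf.map_transition]

theorem E23_rightTwist (hf : IsIndexFixingIsos mul smul f g) {F : (G × G) ≃ (G × G)}
    (hF : ⇑F = pairTwist mul f) (x y z : G) :
    E23 F (rightTwist mul f g (x, y, z)) =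
      (f (mul x (mul y z)) x, f (mul x (mul y z)) y, f (mul x (mul y z)) z) := by
  simp only [rightTwist, E23_apply, hF, pairTwist, hf.mul_transition, hf.map_transition]

theorem rightTwist_E23 (hf : IsIndexFixingIsos mul smul f g) (hG : IsGroup mul e inv)
    {r : (G × G) ≃ (G × G)} (hr : ∀ x y, r (x, y) = (y, mul (mul (inv y) x) y))
    (p : G × G × G) :
    rightTwist mul f g (E23 r p) = E23 r (rightTwist mul f g p) := by
  obtain ⟨x, y, z⟩ := p
  simp only [rightTwist, E23_apply, hr, hG.mul_conj, hf.transition_conj hG]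

theorem leftTwist_E12 (hf : IsIndexFixingIsos mul smul f g) (hG : IsGroup mul e inv)
    {r : (G × G) ≃ (G × G)} (hr : ∀ x y, r (x, y) = (y, mul (mul (inv y) x) y))
    (p : G × G × G) :
    leftTwist mul f g (E12 r p) = E12 r (leftTwist mul f g p) := by
  obtain ⟨x, y, z⟩ := p
  simp only [leftTwist, E12_apply, hr, hG.mul_conj, hf.transition_conj hG]

theorem map_one (hf : IsIndexFixingIsos mul smul f g) (hG : IsGroup mul e inv)
    (hS : IsGroup smul e sinv) (x : G) : f x e = e :=
  hG.map_one hS (hf.map_mul x)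

theorem pairTwist_one_left (hf : IsIndexFixingIsos mul smul f g) (hG : IsGroup mul e inv)
    (hS : IsGroup smul e sinv) (x : G) : pairTwist mul f (e, x) = (e, x) := by
  simp only [pairTwist, hG.one_mul, hf.map_index, hf.map_one hG hS]

theorem pairTwist_one_right (hf : IsIndexFixingIsos mul smul f g) (hG : IsGroup mul e inv)
    (hS : IsGroup smul e sinv) (x : G) : pairTwist mul f (x, e) = (x, e) := by
  simp only [pairTwist, hG.mul_one, hf.map_index, hf.map_one hG hS]

theorem rightTwist_one (hf : IsIndexFixingIsos mul smul f g) (hG : IsGroup mul e inv)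
    (hS : IsGroup smul e sinv) (x y : G) : rightTwist mul f g (e, x, y) = (e, x, y) := by
  simp only [rightTwist, hG.one_mul, hf.transition_self, hf.map_one hG hS]

theorem leftTwist_one (hf : IsIndexFixingIsos mul smul f g) (hG : IsGroup mul e inv)
    (hS : IsGroup smul e sinv) (x y : G) : leftTwist mul f g (x, y, e) = (x, y, e) := by
  simp only [leftTwist, hG.mul_one, hf.transition_self, hf.map_one hG hS]

theorem isGrpTwist (hf : IsIndexFixingIsos mul smul f g) (hG : IsGroup mul e inv)
    (hS : IsGroup smul e sinv) {r F : (G × G) ≃ (G × G)} {Φ Ψ : (G × G × G) ≃ (G × G × G)}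
    (hr : ∀ x y, r (x, y) = (y, mul (mul (inv y) x) y)) (hF : ⇑F = pairTwist mul f)
    (hΦ : ⇑Φ = rightTwist mul f g) (hΨ : ⇑Ψ = leftTwist mul f g) :
    IsGrpTwist mul e r F Φ Ψ where
  t1 := fun (x, y, z) => by
    rw [hΨ, hΦ, hf.E12_leftTwist hF, hf.E23_rightTwist hF, hG.mul_assoc]
  t2 := hΦ ▸ hf.rightTwist_E23 hG hr
  t3 := hΨ ▸ hf.leftTwist_E12 hG hr
  g1a := hΨ ▸ hf.leftTwist_one hG hS
  g1b := hΦ ▸ hf.rightTwist_one hG hS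
  g2a := hF ▸ hf.pairTwist_one_left hG hS
  g2b := hF ▸ hf.pairTwist_one_right hG hS
  g3 := hF ▸ hΦ ▸ hf.M23_rightTwist
  g4 := hF ▸ hΨ ▸ hf.M12_leftTwist

theorem twistMul_eq (hf : IsIndexFixingIsos mul smul f g) {F : (G × G) ≃ (G × G)}
    (hF : ⇑F = pairTwist mul f) (x y : G) : twistMul mul F x y = smul x y := by
  rw [twistMul, ← hf.smul_pairTwist, ← hF, F.apply_symm_apply]

end IsIndexFixingIsos

end Twist

theorem family_of_isos_gives_twist {G : Type*}
    (mul smul : G → G → G) (e : G) (inv sinv : G → G)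
    (hG : IsGroup mul e inv) (hS : IsGroup smul e sinv)
    (f g : G → G → G)
    (hfg : ∀ x, Function.LeftInverse (g x) (f x) ∧ Function.RightInverse (g x) (f x))
    (hfhom : ∀ x a b, f x (mul a b) = smul (f x a) (f x b))
    (hffix : ∀ x, f x x = x)
    (r F : (G × G) ≃ (G × G)) (Φ Ψ : (G × G × G) ≃ (G × G × G))
    (hr : ∀ x y, r (x, y) = (y, mul (mul (inv y) x) y))
    (hF : ∀ x y, F (x, y) = (f (mul x y) x, f (mul x y) y))
    (hΦ : ∀ x y z, Φ (x, y, z) =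
      (f (mul x (mul y z)) x,
       g (f (mul x (mul y z)) (mul y z)) (f (mul x (mul y z)) y),
       g (f (mul x (mul y z)) (mul y z)) (f (mul x (mul y z)) z)))
    (hΨ : ∀ x y z, Ψ (x, y, z) =
      (g (f (mul (mul x y) z) (mul x y)) (f (mul (mul x y) z) x),
       g (f (mul (mul x y) z) (mul x y)) (f (mul (mul x y) z) y),
       f (mul x (mul y z)) z)) :
    IsGrpTwist mul e r F Φ Ψ ∧
    ∀ x y, twistMul mul F x y = smul x y := by
  have hf : IsIndexFixingIsos mul smul f g :=
    ⟨fun x => (hfg x).1, fun x => (hfg x).2, hfhom, hffix⟩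
  have hF' : ⇑F = pairTwist mul f := funext fun (x, y) => hF x y
  have hΦ' : ⇑Φ = rightTwist mul f g := funext fun (x, y, z) => hΦ x y z
  have hΨ' : ⇑Ψ = leftTwist mul f g := funext fun (x, y, z) => by
    rw [hΨ, ← hG.mul_assoc]
    rfl
  exact ⟨hf.isGrpTwist hG hS hr hF' hΦ' hΨ', hf.twistMul_eq hF'⟩

end BraceTwist
end
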